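/- Let (h_n, u_n, f_n) be a contradiction sequence. Then ‖a^{1/2}·u_n‖_{L²} + ‖a^{1/2}·h_n∇u_n‖_{L²} + ‖a^{1/2}·h_n²Δu_n‖_{L²} = o(h_n) as n → ∞. -/

import Mathlib

open MeasureTheory Complex ComplexConjugate

noncomputable section

/-- Partial derivative `∂u/∂xᵢ` of a complex-valued function on `ℝ^d`. -/
def pd {d : ℕ} (i : Fin d) (u : EuclideanSpace ℝ (Fin d) → ℂ)
    (x : EuclideanSpace ℝ (Fin d)) : ℂ :=
  fderiv ℝ u x (EuclideanSpace.single i (1 : ℝ))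

/-- Laplacian `Δu = ∑ᵢ ∂²u/∂xᵢ²` of a complex-valued function on `ℝ^d`. -/
def lap {d : ℕ} (u : EuclideanSpace ℝ (Fin d) → ℂ)
    (x : EuclideanSpace ℝ (Fin d)) : ℂ :=
  ∑ i : Fin d, pd i (pd i u) x

/-- The semiclassical Kelvin–Voigt operator
`P_h u = -h²Δu - u - i h (∇a·∇u + a Δu)`. -/
def Ph {d : ℕ} (h : ℝ) (a : EuclideanSpace ℝ (Fin d) → ℝ)
    (u : EuclideanSpace ℝ (Fin d) → ℂ) (x : EuclideanSpace ℝ (Fin d)) : ℂ :=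
  -(h ^ 2 : ℂ) * lap u x - u x -
    Complex.I * (h : ℂ) *
      ((∑ i : Fin d, (fderiv ℝ a x (EuclideanSpace.single i (1 : ℝ)) : ℂ) * pd i u x) +
        (a x : ℂ) * lap u x)

open Filter Asymptotics

/-!
Pair `P_h u` with `u` in `L²`: the imaginary part is `h‖a^{1/2}∇u‖²`, hence
`‖a^{1/2}h∇u‖² ≤ h‖P_h u‖‖u‖ = o(h²)`. Then pair `P_h u` with `a u`: the real part expresses
`‖a^{1/2}u‖²` through `‖a^{1/2}h∇u‖²`, a source term, and two terms in which a derivative falls on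
`a`. Since `|∇a| ≤ K a^{1/2}`, the latter see `∇u` only through `a^{1/2}∇u`, and Young's inequality
absorbs the factor `‖a^{1/2}u‖` they contain. Finally `(h² + iha)Δu = -(u + P_h u + ih∇a·∇u)` and
`h² ≤ |h² + iha|` bound `a^{1/2}h²Δu` by quantities already controlled.
-/

section CompactSupport

variable {X E : Type*} [TopologicalSpace X] [MeasurableSpace X] [OpensMeasurableSpace X]
  {μ : Measure X} [IsFiniteMeasureOnCompacts μ] [NormedAddCommGroup E] [InnerProductSpace ℂ E]
  {c : X → ℂ} {f g : X → E}

theorem integrable_inner_of_hasCompactSupport (hf : Continuous f) (hg : Continuous g)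
    (hgs : HasCompactSupport g) : Integrable (fun x => inner ℂ (f x) (g x)) μ :=
  (hf.inner hg).integrable_of_hasCompactSupport <| hgs.mono fun x hx hgx => hx <| by
    simp only [hgx, inner_zero_right]

theorem integrable_mul_inner_of_hasCompactSupport (hc : Continuous c) (hf : Continuous f)
    (hg : Continuous g) (hgs : HasCompactSupport g) :
    Integrable (fun x => c x * inner ℂ (f x) (g x)) μ := by
  simpa only [Pi.smul_apply', inner_smul_right] using
    integrable_inner_of_hasCompactSupport (μ := μ) hf (hc.smul hg) (hgs.smul_left (f := c))

end CompactSupport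

section LTwo

variable {α E F G : Type*} [MeasurableSpace α] {μ : Measure α} [NormedAddCommGroup E]
  [NormedAddCommGroup F] [NormedAddCommGroup G]

theorem lpNorm_two_eq_sqrt_integral {f : α → E} (hf : AEStronglyMeasurable f μ) :
    lpNorm f 2 μ = √(∫ x, ‖f x‖ ^ 2 ∂μ) := by
  simp [lpNorm_eq_integral_norm_rpow_toReal two_ne_zero ENNReal.ofNat_ne_top hf,
    Real.sqrt_eq_rpow]

theorem integral_inner_self_eq_lpNorm_sq [InnerProductSpace ℂ E] {f : α → E}
    (hf : AEStronglyMeasurable f μ) :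
    ∫ x, inner ℂ (f x) (f x) ∂μ = ((lpNorm f 2 μ ^ 2 : ℝ) : ℂ) := by
  have hsq : ∫ x, inner ℂ (f x) (f x) ∂μ = ∫ x, ((‖f x‖ ^ 2 : ℝ) : ℂ) ∂μ :=
    integral_congr_ae (.of_forall fun x => by simp [inner_self_eq_norm_sq_to_K])
  rw [hsq, integral_complex_ofReal, lpNorm_two_eq_sqrt_integral hf,
    Real.sq_sqrt (integral_nonneg fun _ => sq_nonneg _)]

theorem norm_integral_le_mul_lpNorm_mul_lpNorm [NormedSpace ℝ G] {f : α → E} {g : α → F}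
    {k : α → G} {C : ℝ} (hC : 0 ≤ C) (hf : MemLp f 2 μ) (hg : MemLp g 2 μ)
    (hk : ∀ x, ‖k x‖ ≤ C * (‖f x‖ * ‖g x‖)) :
    ‖∫ x, k x ∂μ‖ ≤ C * (lpNorm f 2 μ * lpNorm g 2 μ) := by
  have holder : ∫ x, ‖f x‖ * ‖g x‖ ∂μ ≤ lpNorm f 2 μ * lpNorm g 2 μ := by
    have := integral_mul_le_Lp_mul_Lq_of_nonneg (μ := μ) Real.HolderConjugate.two_two
      (.of_forall fun x => norm_nonneg (f x)) (.of_forall fun x => norm_nonneg (g x))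
      (by simpa using hf.norm) (by simpa using hg.norm)
    simpa only [lpNorm_two_eq_sqrt_integral hf.1, lpNorm_two_eq_sqrt_integral hg.1,
      Real.sqrt_eq_rpow, Real.rpow_two] using this
  calc ‖∫ x, k x ∂μ‖ ≤ ∫ x, C * (‖f x‖ * ‖g x‖) ∂μ :=
        norm_integral_le_of_norm_le ((hf.norm.integrable_mul hg.norm).const_mul C)
          (.of_forall hk)
    _ = C * ∫ x, ‖f x‖ * ‖g x‖ ∂μ := integral_const_mul _ _
    _ ≤ C * (lpNorm f 2 μ * lpNorm g 2 μ) := mul_le_mul_of_nonneg_left holder hC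

theorem lpNorm_le_lpNorm_add_mul_lpNorm_add_mul_lpNorm {H : Type*} [NormedAddCommGroup H]
    {f₀ : α → E} {f₁ : α → F} {f₂ : α → G} {f₃ : α → H} {p : ENNReal} {B C : ℝ} (hp : 1 ≤ p)
    (hB : 0 ≤ B) (hC : 0 ≤ C) (h₁ : MemLp f₁ p μ) (h₂ : MemLp f₂ p μ) (h₃ : MemLp f₃ p μ)
    (h_le : ∀ x, ‖f₀ x‖ ≤ ‖f₁ x‖ + B * ‖f₂ x‖ + C * ‖f₃ x‖) :
    lpNorm f₀ p μ ≤ lpNorm f₁ p μ + B * lpNorm f₂ p μ + C * lpNorm f₃ p μ := by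
  have h_two : MemLp (B • fun x => ‖f₂ x‖) p μ := h₂.norm.const_smul B
  have h_three : MemLp (C • fun x => ‖f₃ x‖) p μ := h₃.norm.const_smul C
  calc lpNorm f₀ p μ
      ≤ lpNorm (((fun x => ‖f₁ x‖) + B • fun x => ‖f₂ x‖) + C • fun x => ‖f₃ x‖) p μ :=
        lpNorm_mono_real ((h₁.norm.add h_two).add h_three) h_le
    _ ≤ lpNorm (fun x => ‖f₁ x‖) p μ + lpNorm (B • fun x => ‖f₂ x‖) p μ +
          lpNorm (C • fun x => ‖f₃ x‖) p μ :=
        (lpNorm_add_le' h_three hp).trans (by gcongr; exact lpNorm_add_le' h_two hp)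
    _ = _ := by
        simp [lpNorm_const_smul, lpNorm_norm h₁.1, lpNorm_norm h₂.1, lpNorm_norm h₃.1,
          abs_of_nonneg hB, abs_of_nonneg hC]

end LTwo

section Calculus

variable {d : ℕ} {i : Fin d} {a : EuclideanSpace ℝ (Fin d) → ℝ}
  {f g u v : EuclideanSpace ℝ (Fin d) → ℂ} {x : EuclideanSpace ℝ (Fin d)}

theorem contDiff_pd {n : WithTop ℕ∞} (hu : ContDiff ℝ (n + 1) u) (i : Fin d) :
    ContDiff ℝ n (pd i u) :=
  (hu.fderiv_right le_rfl).clm_apply contDiff_const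

theorem continuous_pd (hu : ContDiff ℝ 1 u) (i : Fin d) : Continuous (pd i u) :=
  (contDiff_pd (n := 0) (by simpa using hu) i).continuous

theorem hasCompactSupport_pd (hu : HasCompactSupport u) (i : Fin d) :
    HasCompactSupport (pd i u) :=
  hu.fderiv_apply ℝ _

theorem pd_mul (hf : DifferentiableAt ℝ f x) (hg : DifferentiableAt ℝ g x) :
    pd i (fun y => f y * g y) x = f x * pd i g x + g x * pd i f x := by
  simp [pd, fderiv_fun_mul hf hg]

theorem pd_conj : pd i (fun y => conj (u y)) x = conj (pd i u x) :=
  congrArg (· (EuclideanSpace.single i (1 : ℝ))) (fderiv_star (𝕜 := ℝ) (f := u) (x := x))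

theorem pd_ofReal (ha : DifferentiableAt ℝ a x) :
    pd i (fun y => (a y : ℂ)) x = fderiv ℝ a x (EuclideanSpace.single i 1) := by
  have := (ofRealCLM.hasFDerivAt.comp x ha.hasFDerivAt).fderiv
  exact congrArg (· (EuclideanSpace.single i (1 : ℝ))) this

theorem integral_inner_pd (hf : ContDiff ℝ 1 f) (hg : ContDiff ℝ 1 g)
    (hgs : HasCompactSupport g) (i : Fin d) :
    ∫ x, inner ℂ (f x) (pd i g x) = -∫ x, inner ℂ (pd i f x) (g x) := by
  have hf' : ContDiff ℝ 1 fun y => conj (f y) := conjCLE.contDiff.comp hf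
  have h_left : Integrable fun x => pd i (fun y => conj (f y)) x * g x :=
    ((continuous_pd hf' i).mul hg.continuous).integrable_of_hasCompactSupport hgs.mul_left
  have h_right : Integrable fun x => conj (f x) * pd i g x :=
    (hf'.continuous.mul (continuous_pd hg i)).integrable_of_hasCompactSupport
      (hasCompactSupport_pd hgs i).mul_left
  have h_mul : Integrable fun x => conj (f x) * g x :=
    (hf'.continuous.mul hg.continuous).integrable_of_hasCompactSupport hgs.mul_left
  have parts := integral_mul_fderiv_eq_neg_fderiv_mul_of_integrable h_left h_right h_mul
    (fun x _ => hf'.differentiable one_ne_zero x) (fun x _ => hg.differentiable one_ne_zero x)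
  change ∫ x, conj (f x) * pd i g x = -∫ x, pd i (fun y => conj (f y)) x * g x at parts
  simpa only [pd_conj, ← RCLike.inner_apply'] using parts

/-- The gradient `∇u` of a complex-valued function on `ℝ^d`, valued in the Hermitian space `ℂ^d`
so that `‖∇u‖² = ∑ᵢ |∂ᵢu|²`. -/
def grad (u : EuclideanSpace ℝ (Fin d) → ℂ) (x : EuclideanSpace ℝ (Fin d)) :
    EuclideanSpace ℂ (Fin d) :=
  WithLp.toLp 2 fun i => pd i u x

theorem inner_grad_grad :
    inner ℂ (grad u x) (grad v x) = ∑ i, inner ℂ (pd i u x) (pd i v x) :=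
  PiLp.inner_apply _ _

theorem norm_grad_sq : ‖grad u x‖ ^ 2 = ∑ i, ‖pd i u x‖ ^ 2 :=
  EuclideanSpace.norm_sq_eq _

theorem continuous_grad (hu : ContDiff ℝ 1 u) : Continuous (grad u) :=
  (PiLp.continuous_toLp 2 _).comp (continuous_pi fun i => continuous_pd hu i)

theorem hasCompactSupport_grad (hu : HasCompactSupport u) : HasCompactSupport (grad u) :=
  (hu.fderiv ℝ).comp_left (g := fun L : EuclideanSpace ℝ (Fin d) →L[ℝ] ℂ =>
    WithLp.toLp 2 fun i => L (EuclideanSpace.single i (1 : ℝ))) rfl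

theorem grad_mul (hf : DifferentiableAt ℝ f x) (hg : DifferentiableAt ℝ g x) :
    grad (fun y => f y * g y) x = f x • grad g x + g x • grad f x := by
  ext i
  simp [grad, pd_mul hf hg]

theorem norm_grad_ofReal (ha : DifferentiableAt ℝ a x) :
    ‖grad (fun y => (a y : ℂ)) x‖ = ‖gradient a x‖ := by
  have coord (i : Fin d) : gradient a x i = fderiv ℝ a x (EuclideanSpace.single i 1) := by
    rw [← inner_gradient_left, EuclideanSpace.inner_single_right]
    simp
  simp [EuclideanSpace.norm_eq, grad, pd_ofReal ha, coord]

/-- The divergence-form operator `div(c∇u)` with a real coefficient `c`: the damping term of `P_h`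
for `c = a`, and the Laplacian for `c = 1`. -/
def divGrad (c : EuclideanSpace ℝ (Fin d) → ℝ) (u : EuclideanSpace ℝ (Fin d) → ℂ)
    (x : EuclideanSpace ℝ (Fin d)) : ℂ :=
  ∑ i, pd i (fun y => (c y : ℂ) * pd i u y) x

theorem divGrad_one : divGrad (fun _ => 1) u = lap u := by
  simp [divGrad, lap, funext_iff]

theorem contDiff_ofReal_mul {n : WithTop ℕ∞} (ha : ContDiff ℝ n a) (hu : ContDiff ℝ n u) :
    ContDiff ℝ n fun x => (a x : ℂ) * u x :=
  (ofRealCLM.contDiff.comp ha).mul hu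

theorem divGrad_apply (ha : DifferentiableAt ℝ a x) (hu : ContDiff ℝ 2 u) :
    divGrad a u x = inner ℂ (grad (fun y => (a y : ℂ)) x) (grad u x) + a x * lap u x := by
  have ha' : DifferentiableAt ℝ (fun y => (a y : ℂ)) x :=
    ofRealCLM.differentiableAt.comp x ha
  have product_rule (i : Fin d) : pd i (fun y => (a y : ℂ) * pd i u y) x =
      a x * pd i (pd i u) x + inner ℂ (pd i (fun y => (a y : ℂ)) x) (pd i u x) := by
    rw [pd_mul ha' ((contDiff_pd (n := 1) hu i).differentiable one_ne_zero x), pd_ofReal ha]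
    simp [RCLike.inner_apply]
  rw [divGrad, inner_grad_grad, lap, Finset.mul_sum, Finset.sum_congr rfl fun i _ => product_rule i,
    Finset.sum_add_distrib, add_comm]

theorem continuous_divGrad (ha : ContDiff ℝ 1 a) (hu : ContDiff ℝ 2 u) :
    Continuous (divGrad a u) :=
  continuous_finsetSum _ fun i _ =>
    continuous_pd (contDiff_ofReal_mul ha (contDiff_pd (n := 1) hu i)) i

theorem continuous_lap (hu : ContDiff ℝ 2 u) : Continuous (lap u) :=
  divGrad_one (u := u) ▸ continuous_divGrad contDiff_const hu

theorem hasCompactSupport_divGrad (hu : HasCompactSupport u) : HasCompactSupport (divGrad a u) := by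
  simpa only [divGrad, Finset.sum_fn] using!
    HasCompactSupport.finset_sum (s := Finset.univ) fun i _ =>
      hasCompactSupport_pd ((hasCompactSupport_pd hu i).mul_left (f := fun x => (a x : ℂ))) i

theorem integral_inner_divGrad (ha : ContDiff ℝ 1 a) (hu : ContDiff ℝ 2 u)
    (hus : HasCompactSupport u) (hv : ContDiff ℝ 1 v) :
    ∫ x, inner ℂ (v x) (divGrad a u x) = -∫ x, a x * inner ℂ (grad v x) (grad u x) := by
  have hflux (i : Fin d) : ContDiff ℝ 1 fun y => (a y : ℂ) * pd i u y :=
    contDiff_ofReal_mul ha (contDiff_pd (n := 1) hu i)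
  have hflux_supp (i : Fin d) : HasCompactSupport fun y => (a y : ℂ) * pd i u y :=
    (hasCompactSupport_pd hus i).mul_left
  have h_left (i : Fin d) :
      Integrable fun x => inner ℂ (v x) (pd i (fun y => (a y : ℂ) * pd i u y) x) :=
    integrable_inner_of_hasCompactSupport hv.continuous (continuous_pd (hflux i) i)
      (hasCompactSupport_pd (hflux_supp i) i)
  have h_right (i : Fin d) : Integrable fun x => inner ℂ (pd i v x) ((a x : ℂ) * pd i u x) :=
    integrable_inner_of_hasCompactSupport (continuous_pd hv i) (hflux i).continuous (hflux_supp i)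
  simp only [divGrad, inner_sum, inner_grad_grad, Finset.mul_sum]
  rw [integral_finsetSum _ fun i _ => h_left i,
    Finset.sum_congr rfl fun i _ => integral_inner_pd hv (hflux i) (hflux_supp i) i,
    Finset.sum_neg_distrib, ← integral_finsetSum _ fun i _ => h_right i]
  simp [mul_left_comm, mul_assoc]

end Calculus

section KelvinVoigt

variable {d : ℕ} {h : ℝ} {a : EuclideanSpace ℝ (Fin d) → ℝ}
  {u v : EuclideanSpace ℝ (Fin d) → ℂ} {x : EuclideanSpace ℝ (Fin d)}

theorem Ph_apply (ha : DifferentiableAt ℝ a x) (hu : ContDiff ℝ 2 u) :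
    Ph h a u x = -(h ^ 2 : ℂ) * lap u x - u x - I * h * divGrad a u x := by
  rw [divGrad_apply ha hu, inner_grad_grad]
  simp [Ph, RCLike.inner_apply, pd_ofReal ha, mul_comm]

theorem Ph_eq (ha : ContDiff ℝ 1 a) (hu : ContDiff ℝ 2 u) :
    Ph h a u =
      -(h ^ 2 : ℂ) • divGrad (fun _ => 1) u - u - (I * h) • divGrad a u := by
  ext x
  simp [Ph_apply (ha.differentiable one_ne_zero x) hu, divGrad_one]

theorem continuous_Ph (ha : ContDiff ℝ 1 a) (hu : ContDiff ℝ 2 u) : Continuous (Ph h a u) := by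
  rw [Ph_eq ha hu]
  exact (((continuous_divGrad contDiff_const hu).const_smul _).sub hu.continuous).sub
    ((continuous_divGrad ha hu).const_smul _)

theorem hasCompactSupport_Ph (ha : ContDiff ℝ 1 a) (hu : ContDiff ℝ 2 u)
    (hus : HasCompactSupport u) : HasCompactSupport (Ph h a u) := by
  rw [Ph_eq ha hu]
  exact (((hasCompactSupport_divGrad hus).smul_left
    (f := fun _ => -(h ^ 2 : ℂ))).sub hus).sub
    ((hasCompactSupport_divGrad hus).smul_left (f := fun _ => I * (h : ℂ)))

theorem memLp_Ph (ha : ContDiff ℝ 1 a) (hu : ContDiff ℝ 2 u) (hus : HasCompactSupport u) :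
    MemLp (Ph h a u) 2 :=
  (continuous_Ph ha hu).memLp_of_hasCompactSupport (hasCompactSupport_Ph ha hu hus)

theorem integral_inner_Ph (ha : ContDiff ℝ 1 a) (hu : ContDiff ℝ 2 u)
    (hus : HasCompactSupport u) (hv : ContDiff ℝ 1 v) :
    ∫ x, inner ℂ (v x) (Ph h a u x) = h ^ 2 * (∫ x, inner ℂ (grad v x) (grad u x)) +
      I * h * (∫ x, a x * inner ℂ (grad v x) (grad u x)) - ∫ x, inner ℂ (v x) (u x) := by
  have h_lap : Integrable fun x => inner ℂ (v x) (divGrad (fun _ => 1) u x) :=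
    integrable_inner_of_hasCompactSupport hv.continuous (continuous_divGrad contDiff_const hu)
      (hasCompactSupport_divGrad hus)
  have h_div : Integrable fun x => inner ℂ (v x) (divGrad a u x) :=
    integrable_inner_of_hasCompactSupport hv.continuous (continuous_divGrad ha hu)
      (hasCompactSupport_divGrad hus)
  have h_u : Integrable fun x => inner ℂ (v x) (u x) :=
    integrable_inner_of_hasCompactSupport hv.continuous hu.continuous hus
  have h_lap_u : Integrable fun x =>
      -(h ^ 2 : ℂ) * inner ℂ (v x) (divGrad (fun _ => 1) u x) - inner ℂ (v x) (u x) :=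
    (h_lap.const_mul _).sub h_u
  simp only [Ph_eq ha hu, Pi.sub_apply, Pi.smul_apply, inner_sub_right, inner_smul_right]
  rw [integral_sub h_lap_u (h_div.const_mul _),
    integral_sub (h_lap.const_mul _) h_u, integral_const_mul, integral_const_mul,
    integral_inner_divGrad contDiff_const hu hus hv, integral_inner_divGrad ha hu hus hv]
  simp only [ofReal_one, one_mul]
  ring

theorem inner_grad_ofReal_mul (ha : DifferentiableAt ℝ a x) (hv : DifferentiableAt ℝ v x) :
    inner ℂ (grad (fun y => (a y : ℂ) * v y) x) (grad u x) =
      a x * inner ℂ (grad v x) (grad u x) +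
        conj (v x) * inner ℂ (grad (fun y => (a y : ℂ)) x) (grad u x) := by
  have ha' : DifferentiableAt ℝ (fun y => (a y : ℂ)) x := ofRealCLM.differentiableAt.comp x ha
  rw [grad_mul ha' hv, inner_add_left, inner_smul_left,
    inner_smul_left, conj_ofReal]

end KelvinVoigt

section DampedNorm

variable {α E : Type*} [MeasureSpace α] [NormedAddCommGroup E] [NormedSpace ℝ E]
  {a : α → ℝ} {f : α → E}

/-- The norm `‖a^{1/2} f‖_{L²}` weighted by a nonnegative damping function `a`, which measures the
size of `f` in the damped region. -/
def dampedNorm (a : α → ℝ) (f : α → E) : ℝ :=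
  lpNorm (fun x => √(a x) • f x) 2 volume

theorem dampedNorm_nonneg : 0 ≤ dampedNorm a f :=
  lpNorm_nonneg

theorem aestronglyMeasurable_sqrt_smul (ha : AEStronglyMeasurable a)
    (hf : AEStronglyMeasurable f) : AEStronglyMeasurable fun x => √(a x) • f x :=
  (Real.continuous_sqrt.comp_aestronglyMeasurable ha).smul hf

theorem dampedNorm_eq_sqrt_integral (ha0 : ∀ x, 0 ≤ a x) (ha : AEStronglyMeasurable a)
    (hf : AEStronglyMeasurable f) : dampedNorm a f = √(∫ x, a x * ‖f x‖ ^ 2) := by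
  rw [dampedNorm, lpNorm_two_eq_sqrt_integral (aestronglyMeasurable_sqrt_smul ha hf)]
  simp only [norm_smul, mul_pow, Real.norm_eq_abs, sq_abs, Real.sq_sqrt (ha0 _)]

theorem integral_mul_inner_self_eq_dampedNorm_sq {E : Type*} [NormedAddCommGroup E]
    [InnerProductSpace ℂ E] {f : α → E} (ha0 : ∀ x, 0 ≤ a x) (ha : AEStronglyMeasurable a)
    (hf : AEStronglyMeasurable f) :
    ∫ x, a x * inner ℂ (f x) (f x) = ((dampedNorm a f ^ 2 : ℝ) : ℂ) := by
  rw [dampedNorm, ← integral_inner_self_eq_lpNorm_sq (aestronglyMeasurable_sqrt_smul ha hf)]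
  refine integral_congr_ae (.of_forall fun x => ?_)
  simp [inner_self_eq_norm_sq_to_K, norm_smul, mul_pow, ← ofReal_pow, Real.sq_sqrt (ha0 x)]

theorem memLp_sqrt_smul [TopologicalSpace α] [OpensMeasurableSpace α]
    [IsFiniteMeasureOnCompacts (volume : Measure α)] (ha : Continuous a) (hf : Continuous f)
    (hfs : HasCompactSupport f) : MemLp (fun x => √(a x) • f x) 2 :=
  (ha.sqrt.smul hf).memLp_of_hasCompactSupport hfs.smul_left

end DampedNorm

section DampedEstimates

variable {d : ℕ} {h K M : ℝ} {a : EuclideanSpace ℝ (Fin d) → ℝ}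
  {u : EuclideanSpace ℝ (Fin d) → ℂ} {x : EuclideanSpace ℝ (Fin d)}

theorem im_integral_inner_Ph_self (ha : ContDiff ℝ 1 a) (ha0 : ∀ x, 0 ≤ a x)
    (hu : ContDiff ℝ 2 u) (hus : HasCompactSupport u) :
    (∫ x, inner ℂ (u x) (Ph h a u x)).im = h * dampedNorm a (grad u) ^ 2 := by
  have hu1 : ContDiff ℝ 1 u := hu.of_le one_le_two
  have hgrad : AEStronglyMeasurable (grad u) := (continuous_grad hu1).aestronglyMeasurable
  rw [integral_inner_Ph ha hu hus hu1, integral_inner_self_eq_lpNorm_sq hgrad,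
    integral_mul_inner_self_eq_dampedNorm_sq ha0 ha.continuous.aestronglyMeasurable hgrad,
    integral_inner_self_eq_lpNorm_sq hu.continuous.aestronglyMeasurable]
  simp [← ofReal_pow, -ofReal_mul]

theorem mul_dampedNorm_grad_sq_le (ha : ContDiff ℝ 1 a) (ha0 : ∀ x, 0 ≤ a x)
    (hu : ContDiff ℝ 2 u) (hus : HasCompactSupport u) :
    h * dampedNorm a (grad u) ^ 2 ≤ lpNorm (Ph h a u) 2 volume * lpNorm u 2 volume := by
  rw [← im_integral_inner_Ph_self ha ha0 hu hus, mul_comm]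
  refine (im_le_norm _).trans ?_
  simpa only [one_mul] using norm_integral_le_mul_lpNorm_mul_lpNorm zero_le_one
    (hu.continuous.memLp_of_hasCompactSupport hus) (memLp_Ph ha hu hus)
    fun x => (norm_inner_le_norm _ _).trans_eq (one_mul _).symm

theorem integral_mul_inner_grad_ofReal_mul {b : EuclideanSpace ℝ (Fin d) → ℝ}
    (hb : Continuous b) (hb0 : ∀ x, 0 ≤ b x) (ha : ContDiff ℝ 1 a) (ha0 : ∀ x, 0 ≤ a x)
    (hu : ContDiff ℝ 1 u) (hus : HasCompactSupport u) :
    ∫ x, b x * inner ℂ (grad (fun y => (a y : ℂ) * u y) x) (grad u x) =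
      (dampedNorm (fun x => b x * a x) (grad u) ^ 2 : ℝ) +
        ∫ x, b x * (conj (u x) * inner ℂ (grad (fun y => (a y : ℂ)) x) (grad u x)) := by
  have ha' : ContDiff ℝ 1 fun y => (a y : ℂ) := ofRealCLM.contDiff.comp ha
  have hba : Continuous fun x => b x * a x := hb.mul ha.continuous
  have hgrad : Continuous (grad u) := continuous_grad hu
  have h_grad : Integrable fun x => ((b x * a x : ℝ) : ℂ) * inner ℂ (grad u x) (grad u x) :=
    integrable_mul_inner_of_hasCompactSupport (by fun_prop) hgrad hgrad
      (hasCompactSupport_grad hus)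
  have h_cross : Integrable fun x =>
      b x * conj (u x) * inner ℂ (grad (fun y => (a y : ℂ)) x) (grad u x) :=
    integrable_mul_inner_of_hasCompactSupport (by fun_prop) (continuous_grad ha') hgrad
      (hasCompactSupport_grad hus)
  simp only [← mul_assoc]
  rw [← integral_mul_inner_self_eq_dampedNorm_sq (fun x => mul_nonneg (hb0 x) (ha0 x))
    hba.aestronglyMeasurable hgrad.aestronglyMeasurable, ← integral_add h_grad h_cross]
  refine integral_congr_ae (.of_forall fun x => ?_)
  simp only [inner_grad_ofReal_mul (ha.differentiable one_ne_zero x)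
    (hu.differentiable one_ne_zero x), ofReal_mul]
  ring

theorem dampedNorm_sq_eq (ha : ContDiff ℝ 1 a) (ha0 : ∀ x, 0 ≤ a x)
    (hu : ContDiff ℝ 2 u) (hus : HasCompactSupport u) :
    dampedNorm a u ^ 2 = h ^ 2 * (dampedNorm a (grad u) ^ 2 +
        (∫ x, conj (u x) * inner ℂ (grad (fun y => (a y : ℂ)) x) (grad u x)).re) -
      h * (∫ x, a x * (conj (u x) * inner ℂ (grad (fun y => (a y : ℂ)) x) (grad u x))).im -
      (∫ x, inner ℂ (a x * u x) (Ph h a u x)).re := by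
  have hu1 : ContDiff ℝ 1 u := hu.of_le one_le_two
  have h_one := integral_mul_inner_grad_ofReal_mul continuous_const (fun _ => zero_le_one)
    ha ha0 hu1 hus
  have h_a := integral_mul_inner_grad_ofReal_mul ha.continuous ha0 ha ha0 hu1 hus
  have h_mass : ∫ x, inner ℂ (a x * u x) (u x) = ((dampedNorm a u ^ 2 : ℝ) : ℂ) := by
    rw [← integral_mul_inner_self_eq_dampedNorm_sq ha0 ha.continuous.aestronglyMeasurable
      hu.continuous.aestronglyMeasurable]
    refine integral_congr_ae (.of_forall fun x => ?_)
    simp only [← smul_eq_mul, inner_smul_left, conj_ofReal]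
  simp only [ofReal_one, one_mul] at h_one
  rw [integral_inner_Ph ha hu hus (contDiff_ofReal_mul ha hu1), h_one, h_a, h_mass]
  simp [← ofReal_pow, -ofReal_mul]
  ring

theorem norm_inner_grad_le (ha : DifferentiableAt ℝ a x) (haK : ‖gradient a x‖ ≤ K * √(a x)) :
    ‖inner ℂ (grad (fun y => (a y : ℂ)) x) (grad u x)‖ ≤ K * ‖√(a x) • grad u x‖ := by
  calc ‖inner ℂ (grad (fun y => (a y : ℂ)) x) (grad u x)‖
      ≤ ‖gradient a x‖ * ‖grad u x‖ :=
        (norm_inner_le_norm _ _).trans_eq (by rw [norm_grad_ofReal ha])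
    _ ≤ K * √(a x) * ‖grad u x‖ := by gcongr
    _ = K * ‖√(a x) • grad u x‖ := by
        rw [norm_smul, Real.norm_of_nonneg (Real.sqrt_nonneg _), mul_assoc]

theorem norm_integral_conj_mul_inner_grad_le (ha : ContDiff ℝ 1 a) (hK : 0 ≤ K)
    (haK : ∀ x, ‖gradient a x‖ ≤ K * √(a x)) (hu : ContDiff ℝ 1 u) (hus : HasCompactSupport u) :
    ‖∫ x, conj (u x) * inner ℂ (grad (fun y => (a y : ℂ)) x) (grad u x)‖ ≤
      K * (lpNorm u 2 volume * dampedNorm a (grad u)) := by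
  refine norm_integral_le_mul_lpNorm_mul_lpNorm hK
    (hu.continuous.memLp_of_hasCompactSupport hus)
    (memLp_sqrt_smul ha.continuous (continuous_grad hu) (hasCompactSupport_grad hus)) fun x => ?_
  rw [norm_mul, norm_conj, mul_left_comm]
  gcongr
  exact norm_inner_grad_le (ha.differentiable one_ne_zero x) (haK x)

theorem norm_ofReal_le_mul_sqrt {r : ℝ} (hr : 0 ≤ r) (hM : √r ≤ M) : ‖(r : ℂ)‖ ≤ M * √r := by
  rw [norm_real, Real.norm_of_nonneg hr]
  nth_rw 1 [← Real.mul_self_sqrt hr]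
  gcongr

theorem norm_integral_mul_conj_mul_inner_grad_le (ha : ContDiff ℝ 1 a) (ha0 : ∀ x, 0 ≤ a x)
    (haM : ∀ x, √(a x) ≤ M) (hK : 0 ≤ K) (haK : ∀ x, ‖gradient a x‖ ≤ K * √(a x))
    (hu : ContDiff ℝ 1 u) (hus : HasCompactSupport u) :
    ‖∫ x, a x * (conj (u x) * inner ℂ (grad (fun y => (a y : ℂ)) x) (grad u x))‖ ≤
      M * K * (dampedNorm a u * dampedNorm a (grad u)) := by
  have hM : 0 ≤ M := (Real.sqrt_nonneg _).trans (haM 0)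
  refine norm_integral_le_mul_lpNorm_mul_lpNorm (mul_nonneg hM hK)
    (memLp_sqrt_smul ha.continuous hu.continuous hus)
    (memLp_sqrt_smul ha.continuous (continuous_grad hu) (hasCompactSupport_grad hus)) fun x => ?_
  calc ‖a x * (conj (u x) * inner ℂ (grad (fun y => (a y : ℂ)) x) (grad u x))‖
      = ‖(a x : ℂ)‖ * (‖u x‖ * ‖inner ℂ (grad (fun y => (a y : ℂ)) x) (grad u x)‖) := by
        rw [norm_mul, norm_mul, norm_conj]
    _ ≤ M * √(a x) * (‖u x‖ * (K * ‖√(a x) • grad u x‖)) := by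
        gcongr
        · exact norm_ofReal_le_mul_sqrt (ha0 x) (haM x)
        · exact norm_inner_grad_le (ha.differentiable one_ne_zero x) (haK x)
    _ = M * K * (‖√(a x) • u x‖ * ‖√(a x) • grad u x‖) := by
        rw [norm_smul _ (u x), Real.norm_of_nonneg (Real.sqrt_nonneg _)]
        ring

theorem norm_integral_inner_ofReal_mul_Ph_le (ha : ContDiff ℝ 1 a) (ha0 : ∀ x, 0 ≤ a x)
    (haM : ∀ x, √(a x) ≤ M) (hu : ContDiff ℝ 2 u) (hus : HasCompactSupport u) :
    ‖∫ x, inner ℂ (a x * u x) (Ph h a u x)‖ ≤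
      M * (dampedNorm a u * lpNorm (Ph h a u) 2 volume) := by
  have hM : 0 ≤ M := (Real.sqrt_nonneg _).trans (haM 0)
  refine norm_integral_le_mul_lpNorm_mul_lpNorm hM
    (memLp_sqrt_smul ha.continuous hu.continuous hus) (memLp_Ph ha hu hus) fun x => ?_
  calc ‖inner ℂ (a x * u x) (Ph h a u x)‖ ≤ ‖(a x : ℂ)‖ * ‖u x‖ * ‖Ph h a u x‖ :=
        (norm_inner_le_norm _ _).trans_eq (by rw [norm_mul])
    _ ≤ M * √(a x) * ‖u x‖ * ‖Ph h a u x‖ := by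
        gcongr
        exact norm_ofReal_le_mul_sqrt (ha0 x) (haM x)
    _ = M * (‖√(a x) • u x‖ * ‖Ph h a u x‖) := by
        rw [norm_smul, Real.norm_of_nonneg (Real.sqrt_nonneg _)]
        ring

theorem dampedNorm_sq_le (ha : ContDiff ℝ 1 a) (ha0 : ∀ x, 0 ≤ a x)
    (haM : ∀ x, √(a x) ≤ M) (hK : 0 ≤ K) (haK : ∀ x, ‖gradient a x‖ ≤ K * √(a x))
    (hh : 0 ≤ h) (hu : ContDiff ℝ 2 u) (hus : HasCompactSupport u) :
    dampedNorm a u ^ 2 ≤ (h * dampedNorm a (grad u)) ^ 2 +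
      K * (h * dampedNorm a (grad u)) * (h * lpNorm u 2 volume) +
      (M * K * (h * dampedNorm a (grad u)) + M * lpNorm (Ph h a u) 2 volume) *
        dampedNorm a u := by
  have hu1 : ContDiff ℝ 1 u := hu.of_le one_le_two
  have h_re := (re_le_norm _).trans (norm_integral_conj_mul_inner_grad_le ha hK haK hu1 hus)
  have h_im := (abs_le.mp (abs_im_le_norm _)).1.trans' (neg_le_neg
    (norm_integral_mul_conj_mul_inner_grad_le ha ha0 haM hK haK hu1 hus))
  have h_source := (abs_le.mp (abs_re_le_norm _)).1.trans' (neg_le_neg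
    (norm_integral_inner_ofReal_mul_Ph_le (h := h) ha ha0 haM hu hus))
  rw [dampedNorm_sq_eq (h := h) ha ha0 hu hus]
  linarith [mul_le_mul_of_nonneg_left h_re (sq_nonneg h), mul_le_mul_of_nonneg_left h_im hh]

theorem sq_mul_norm_lap_le (hh : 0 ≤ h) (ha : DifferentiableAt ℝ a x) (hu : ContDiff ℝ 2 u) :
    h ^ 2 * ‖lap u x‖ ≤ ‖u x‖ + ‖Ph h a u x‖ +
      h * ‖inner ℂ (grad (fun y => (a y : ℂ)) x) (grad u x)‖ := by
  have h_coeff : h ^ 2 ≤ ‖(h ^ 2 + I * h * a x : ℂ)‖ := by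
    have := (le_abs_self _).trans (abs_re_le_norm (h ^ 2 + I * h * a x : ℂ))
    simpa [← ofReal_pow] using this
  have h_eq : (h ^ 2 + I * h * a x : ℂ) * lap u x =
      -(u x + Ph h a u x + h * (I * inner ℂ (grad (fun y => (a y : ℂ)) x) (grad u x))) := by
    rw [Ph_apply ha hu, divGrad_apply ha hu]
    ring
  calc h ^ 2 * ‖lap u x‖ ≤ ‖(h ^ 2 + I * h * a x : ℂ) * lap u x‖ := by
        rw [norm_mul]
        gcongr
    _ ≤ ‖u x‖ + ‖Ph h a u x‖ + ‖h * (I * inner ℂ (grad (fun y => (a y : ℂ)) x) (grad u x))‖ := by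
        rw [h_eq, norm_neg]
        exact norm_add₃_le
    _ = _ := by simp [abs_of_nonneg hh]

theorem dampedNorm_sq_mul_lap_le (ha : ContDiff ℝ 1 a) (haM : ∀ x, √(a x) ≤ M) (hK : 0 ≤ K)
    (haK : ∀ x, ‖gradient a x‖ ≤ K * √(a x)) (hh : 0 ≤ h) (hu : ContDiff ℝ 2 u)
    (hus : HasCompactSupport u) :
    dampedNorm a (fun x => (h ^ 2 : ℂ) * lap u x) ≤
      dampedNorm a u + M * lpNorm (Ph h a u) 2 volume +
        M * K * (h * dampedNorm a (grad u)) := by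
  have hM : 0 ≤ M := (Real.sqrt_nonneg _).trans (haM 0)
  have hu1 : ContDiff ℝ 1 u := hu.of_le one_le_two
  rw [← mul_assoc]
  refine lpNorm_le_lpNorm_add_mul_lpNorm_add_mul_lpNorm one_le_two hM (by positivity)
    (memLp_sqrt_smul ha.continuous hu.continuous hus) (memLp_Ph ha hu hus)
    (memLp_sqrt_smul ha.continuous (continuous_grad hu1) (hasCompactSupport_grad hus)) fun x => ?_
  have ha' : DifferentiableAt ℝ a x := ha.differentiable one_ne_zero x
  calc ‖√(a x) • ((h ^ 2 : ℂ) * lap u x)‖ = √(a x) * (h ^ 2 * ‖lap u x‖) := by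
        simp [abs_of_nonneg hh, Real.sqrt_nonneg]
    _ ≤ √(a x) * (‖u x‖ + ‖Ph h a u x‖ + h * (K * ‖√(a x) • grad u x‖)) := by
        gcongr
        refine (sq_mul_norm_lap_le hh ha' hu).trans ?_
        gcongr
        exact norm_inner_grad_le ha' (haK x)
    _ = ‖√(a x) • u x‖ + √(a x) * (‖Ph h a u x‖ + K * h * ‖√(a x) • grad u x‖) := by
        rw [norm_smul _ (u x), Real.norm_of_nonneg (Real.sqrt_nonneg _)]
        ring
    _ ≤ ‖√(a x) • u x‖ + M * (‖Ph h a u x‖ + K * h * ‖√(a x) • grad u x‖) := by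
        gcongr
        exact haM x
    _ = _ := by ring

end DampedEstimates

section LittleO

variable {ι : Type*} {l : Filter ι}

theorem isLittleO_of_sq_le_add_mul {f g p q : ι → ℝ} (hp : p =o[l] fun n => g n ^ 2)
    (hq : q =o[l] g) (hf : ∀ n, f n ^ 2 ≤ p n + q n * f n) : f =o[l] g := by
  have h_young (n) : ‖f n ^ 2‖ ≤ 2 * p n + q n ^ 2 := by
    rw [Real.norm_of_nonneg (sq_nonneg _)]
    linarith [hf n, two_mul_le_add_sq (q n) (f n)]
  have h_bound : (fun n => 2 * p n + q n ^ 2) =o[l] fun n => g n ^ 2 :=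
    (hp.const_mul_left 2).add (hq.pow zero_lt_two)
  exact IsLittleO.of_pow ((IsBigO.of_norm_le h_young).trans_isLittleO h_bound) two_ne_zero

variable {d : ℕ} {a : EuclideanSpace ℝ (Fin d) → ℝ} {K M : ℝ} {h : ι → ℝ}
  {u : ι → EuclideanSpace ℝ (Fin d) → ℂ}

theorem mul_dampedNorm_grad_isLittleO (ha : ContDiff ℝ 1 a) (ha0 : ∀ x, 0 ≤ a x)
    (hh : ∀ n, 0 ≤ h n) (hu : ∀ n, ContDiff ℝ 2 (u n)) (hus : ∀ n, HasCompactSupport (u n))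
    (hu_bdd : (fun n => lpNorm (u n) 2 volume) =O[l] fun _ => (1 : ℝ))
    (hf : (fun n => lpNorm (Ph (h n) a (u n)) 2 volume) =o[l] h) :
    (fun n => h n * dampedNorm a (grad (u n))) =o[l] h := by
  have h_prod : (fun n => h n * (lpNorm (Ph (h n) a (u n)) 2 volume * lpNorm (u n) 2 volume))
      =o[l] fun n => h n ^ 2 := by
    simpa only [sq, mul_one] using (isBigO_refl h l).mul_isLittleO (hf.mul_isBigO hu_bdd)
  refine isLittleO_of_sq_le_add_mul h_prod (isLittleO_zero h l) fun n => ?_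
  rw [zero_mul, add_zero, mul_pow, sq (h n), mul_assoc]
  exact mul_le_mul_of_nonneg_left (mul_dampedNorm_grad_sq_le ha ha0 (hu n) (hus n)) (hh n)

theorem dampedNorm_isLittleO (ha : ContDiff ℝ 1 a) (ha0 : ∀ x, 0 ≤ a x)
    (haM : ∀ x, √(a x) ≤ M) (hK : 0 ≤ K) (haK : ∀ x, ‖gradient a x‖ ≤ K * √(a x))
    (hh : ∀ n, 0 ≤ h n) (hu : ∀ n, ContDiff ℝ 2 (u n)) (hus : ∀ n, HasCompactSupport (u n))
    (hu_bdd : (fun n => lpNorm (u n) 2 volume) =O[l] fun _ => (1 : ℝ))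
    (hf : (fun n => lpNorm (Ph (h n) a (u n)) 2 volume) =o[l] h) :
    (fun n => dampedNorm a (u n)) =o[l] h := by
  have h_grad := mul_dampedNorm_grad_isLittleO ha ha0 hh hu hus hu_bdd hf
  have h_mass : (fun n => h n * lpNorm (u n) 2 volume) =O[l] h := by
    simpa only [mul_one] using (isBigO_refl h l).mul hu_bdd
  have h_source : (fun n => (h n * dampedNorm a (grad (u n))) ^ 2 +
      K * (h n * dampedNorm a (grad (u n))) * (h n * lpNorm (u n) 2 volume))
      =o[l] fun n => h n ^ 2 :=
    (h_grad.pow zero_lt_two).add <| by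
      simpa only [sq] using (h_grad.const_mul_left K).mul_isBigO h_mass
  exact isLittleO_of_sq_le_add_mul h_source
    ((h_grad.const_mul_left (M * K)).add (hf.const_mul_left M))
    fun n => dampedNorm_sq_le ha ha0 haM hK haK (hh n) (hu n) (hus n)

theorem dampedNorm_sq_mul_lap_isLittleO (ha : ContDiff ℝ 1 a) (ha0 : ∀ x, 0 ≤ a x)
    (haM : ∀ x, √(a x) ≤ M) (hK : 0 ≤ K) (haK : ∀ x, ‖gradient a x‖ ≤ K * √(a x))
    (hh : ∀ n, 0 ≤ h n) (hu : ∀ n, ContDiff ℝ 2 (u n)) (hus : ∀ n, HasCompactSupport (u n))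
    (hu_bdd : (fun n => lpNorm (u n) 2 volume) =O[l] fun _ => (1 : ℝ))
    (hf : (fun n => lpNorm (Ph (h n) a (u n)) 2 volume) =o[l] h) :
    (fun n => dampedNorm a fun x => (h n ^ 2 : ℂ) * lap (u n) x) =o[l] h := by
  have h_grad := mul_dampedNorm_grad_isLittleO ha ha0 hh hu hus hu_bdd hf
  have h_u := dampedNorm_isLittleO ha ha0 haM hK haK hh hu hus hu_bdd hf
  refine (IsBigO.of_norm_le fun n => ?_).trans_isLittleO
    ((h_u.add (hf.const_mul_left M)).add (h_grad.const_mul_left (M * K)))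
  rw [Real.norm_of_nonneg dampedNorm_nonneg]
  exact dampedNorm_sq_mul_lap_le ha haM hK haK (hh n) (hu n) (hus n)

end LittleO

section Integrals

variable {d : ℕ} {a : EuclideanSpace ℝ (Fin d) → ℝ} {u : EuclideanSpace ℝ (Fin d) → ℂ}

theorem sqrt_integral_mul_sum_pd_eq (ha : Continuous a) (ha0 : ∀ x, 0 ≤ a x)
    (hu : ContDiff ℝ 1 u) {h : ℝ} (hh : 0 ≤ h) :
    √(∫ x, a x * ∑ i, ‖(h : ℂ) * pd i u x‖ ^ 2) = h * dampedNorm a (grad u) := by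
  have h_sum (x) : a x * ∑ i, ‖(h : ℂ) * pd i u x‖ ^ 2 = h ^ 2 * (a x * ‖grad u x‖ ^ 2) := by
    simp only [norm_mul, mul_pow, ← Finset.mul_sum, ← norm_grad_sq, norm_real, Real.norm_eq_abs,
      sq_abs]
    ring
  simp only [h_sum, integral_const_mul]
  rw [Real.sqrt_mul (sq_nonneg h), Real.sqrt_sq hh, dampedNorm_eq_sqrt_integral ha0
    ha.aestronglyMeasurable (continuous_grad hu).aestronglyMeasurable]

end Integrals

theorem stmt_6_general {ι : Type*} {l : Filter ι} {d : ℕ}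
    {a : EuclideanSpace ℝ (Fin d) → ℝ} {K : ℝ}
    (haC1 : ContDiff ℝ 1 a) (habd : ∃ C, ∀ x, a x ≤ C) (hapos : ∀ x, 0 ≤ a x)
    (haK : ∀ x, ‖gradient a x‖ ≤ K * √(a x))
    {h : ι → ℝ} {u : ι → EuclideanSpace ℝ (Fin d) → ℂ} (hh : ∀ n, 0 ≤ h n)
    (hu : ∀ n, ContDiff ℝ 2 (u n)) (hus : ∀ n, HasCompactSupport (u n))
    (hu_bdd : (fun n => √(∫ x, ‖u n x‖ ^ 2)) =O[l] fun _ => (1 : ℝ))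
    (hf : (fun n => √(∫ x, ‖Ph (h n) a (u n) x‖ ^ 2)) =o[l] h) :
    (fun n => √(∫ x, a x * ‖u n x‖ ^ 2)
      + √(∫ x, a x * ∑ i : Fin d, ‖(h n : ℂ) * pd i (u n) x‖ ^ 2)
      + √(∫ x, a x * ‖(h n ^ 2 : ℂ) * lap (u n) x‖ ^ 2)) =o[l] h := by
  obtain ⟨C, hC⟩ := habd
  have haM (x) : √(a x) ≤ √C := Real.sqrt_le_sqrt (hC x)
  have haK' (x) : ‖gradient a x‖ ≤ |K| * √(a x) :=
    (haK x).trans (by gcongr; exact le_abs_self K)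
  have ha_meas : AEStronglyMeasurable a := haC1.continuous.aestronglyMeasurable
  have hu_meas (n) : AEStronglyMeasurable (u n) := (hu n).continuous.aestronglyMeasurable
  have hlap_meas (n) : AEStronglyMeasurable fun x => (h n ^ 2 : ℂ) * lap (u n) x :=
    (continuous_const.mul (continuous_lap (hu n))).aestronglyMeasurable
  simp only [← lpNorm_two_eq_sqrt_integral (hu_meas _)] at hu_bdd
  simp only [← lpNorm_two_eq_sqrt_integral (memLp_Ph haC1 (hu _) (hus _)).1] at hf
  simp only [sqrt_integral_mul_sum_pd_eq haC1.continuous hapos ((hu _).of_le one_le_two) (hh _),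
    ← dampedNorm_eq_sqrt_integral hapos ha_meas (hu_meas _),
    ← dampedNorm_eq_sqrt_integral hapos ha_meas (hlap_meas _)]
  exact ((dampedNorm_isLittleO haC1 hapos haM (abs_nonneg K) haK' hh hu hus hu_bdd hf).add
    (mul_dampedNorm_grad_isLittleO haC1 hapos hh hu hus hu_bdd hf)).add
    (dampedNorm_sq_mul_lap_isLittleO haC1 hapos haM (abs_nonneg K) haK' hh hu hus hu_bdd hf)

/-- **Corollary 3.2 of the paper** (a priori estimate in the damped region): for a
contradiction sequence, `‖a^{1/2}u_n‖_{L²} + ‖a^{1/2}h_n∇u_n‖_{L²} +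
‖a^{1/2}h_n²Δu_n‖_{L²} = o(h_n)`. -/
theorem stmt_6 (d : ℕ) (hd : 1 ≤ d)
    (a : EuclideanSpace ℝ (Fin d) → ℝ) (K : ℝ)
    (haC1 : ContDiff ℝ 1 a) (habd : ∃ C, ∀ x, a x ≤ C) (hapos : ∀ x, 0 ≤ a x)
    (haK : ∀ x, ‖gradient a x‖ ≤ K * Real.sqrt (a x))
    (h : ℕ → ℝ) (u : ℕ → EuclideanSpace ℝ (Fin d) → ℂ)
    (hhpos : ∀ n, 0 < h n) (hh0 : Tendsto h atTop (nhds 0))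
    (husm : ∀ n, ContDiff ℝ (⊤ : ℕ∞) (u n)) (husupp : ∀ n, HasCompactSupport (u n))
    (hunorm : ∀ n, (∫ x, ‖u n x‖ ^ 2) = 1)
    (hf : (fun n => Real.sqrt (∫ x, ‖Ph (h n) a (u n) x‖ ^ 2)) =o[atTop] h) :
    (fun n => Real.sqrt (∫ x, a x * ‖u n x‖ ^ 2)
      + Real.sqrt (∫ x, a x * ∑ i : Fin d, ‖(h n : ℂ) * pd i (u n) x‖ ^ 2)
      + Real.sqrt (∫ x, a x * ‖((h n : ℝ) ^ 2 : ℂ) * lap (u n) x‖ ^ 2)) =o[atTop] h :=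
  stmt_6_general haC1 habd hapos haK (fun n => (hhpos n).le)
    (fun n => contDiff_infty.mp (husm n) 2) husupp
    (by simpa only [hunorm, Real.sqrt_one] using isBigO_refl _ _) hf

end
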